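/- arXiv:1407.8443 — 2 statements merged into one kernel-verified Lean document; each statement's English description precedes it below -/
import Mathlib

section
/- For positive integers c, n, m with 3 ≤ m ≤ n, one has S(c·2^n + 2^{m−1}, 2^m − 1) ≡ 2^{m−1} (mod 2^{m+1}). -/
/-!
Put `k = 2^m - 1`, `q = 2^(m-3)`, and let `P_m(x) = ∏_{j ≤ k} (1 - j x)`, so that
`∑_e S(k + e, k) x^e = 1 / P_m(x)` (`stirlingSeries_mul_prod`). Everything rests on computing
`P_m` modulo `2^(m+1) = 16 q`.

Splitting the product in half expresses `P_(m+1)` as `P_m` times a shift of `P_m` by `2^m x`.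
For `m ≥ 3` the derivative of the homogenized product in the shift variable vanishes modulo `4`
(`fallProd_shift`), so `P_(m+1) ≡ P_m²` modulo `2^(m+2)`, whence
`P_m ≡ P_3^q = ((1 + x²)² (1 + 4x) + 12 x⁶)^q` modulo `16 q` (`fallProd_modEq`). Writing the base
as `(1 + x²)² (1 + 4u)` with `u = x + 3 x⁶ / (1 + x²)²` and expanding `(1 + 4u)^(-q)` to second
order shows that, modulo `16 q`, the odd part of `1 / P_m` is `-4 q x (1 + x²)^(-2q)`
(`inverse_modEq`).

It remains to know the coefficients of `(1 + x²)^(-2q)` modulo `4`, where it agrees with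
`(1 + x^(2q))⁻² = ∑ (-1)^i (i + 1) x^(2qi)` (`coeff_inv_pow`). The index in question is
`N - k = 2 q i + 1` with `i ≡ 2` modulo `4`, so the coefficient is `≡ -4 q · 3 ≡ 4 q = 2^(m-1)`
modulo `16 q`.
-/

/-- Stirling numbers of the second kind -/
def stirling : ℕ → ℕ → ℕ
  | 0, 0 => 1
  | 0, _ + 1 => 0
  | _ + 1, 0 => 0
  | n + 1, k + 1 => stirling n k + (k + 1) * stirling n (k + 1)

open PowerSeries

/-- The product `∏_{0 ≤ j < 2^m} (y - j x)`: the homogeneous form of the falling factorial of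
length `2^m`. At `y = 1` it is the denominator of the generating function of `S(·, 2^m - 1)`. -/
def fallProd {R : Type*} [CommRing R] (m : ℕ) (x y : R) : R :=
  ∏ j ∈ Finset.range (2 ^ m), (y - (j : R) * x)

section Denominator

variable {R : Type*} [CommRing R]

lemma fallProd_succ (m : ℕ) (x y : R) :
    fallProd (m + 1) x y = fallProd m x y * fallProd m x (y - 2 ^ m * x) := by
  unfold fallProd
  rw [pow_succ, mul_two, Finset.prod_range_add]
  congr 1
  refine Finset.prod_congr rfl fun j _ => ?_
  push_cast
  ring

/-- The derivative of `∏ (y - j x)` in `y` vanishes modulo `4` once there are at least `8` factors;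
this is stated as a finite difference with increment `4 k`. -/
lemma fallProd_shift (s : ℕ) (x y k : R) :
    16 * k ∣ fallProd (s + 3) x (y + 4 * k) - fallProd (s + 3) x y := by
  induction s generalizing y with
  | zero =>
    -- The Taylor expansion of the degree-8 product in the increment `4 k`, divided by `16 k`.
    refine ⟨2*y^7 + 28*y^6*k + 224*y^5*k^2 + 1120*y^4*k^3 + 3584*y^3*k^4 + 7168*y^2*k^5 + 8192*y*k^6 +
    4096*k^7 - 49*x*y^6 - 588*x*y^5*k - 3920*x*y^4*k^2 - 15680*x*y^3*k^3 - 37632*x*y^2*k^4 -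
    50176*x*y*k^5 - 28672*x*k^6 + 483*x^2*y^5 + 4830*x^2*y^4*k + 25760*x^2*y^3*k^2 +
    77280*x^2*y^2*k^3 + 123648*x^2*y*k^4 + 82432*x^2*k^5 - 2450*x^3*y^4 - 19600*x^3*y^3*k -
    78400*x^3*y^2*k^2 - 156800*x^3*y*k^3 - 125440*x^3*k^4 + 6769*x^4*y^3 + 40614*x^4*y^2*k +
    108304*x^4*y*k^2 + 108304*x^4*k^3 - 9849*x^5*y^2 - 39396*x^5*y*k - 52528*x^5*k^2 +
    6534*x^6*y + 13068*x^6*k - 1260*x^7, ?_⟩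
    simp only [fallProd, zero_add, show 2 ^ 3 = 8 from rfl, Finset.prod_range_succ,
      Finset.prod_range_zero]
    push_cast
    ring
  | succ s ih =>
    rw [show s + 1 + 3 = s + 3 + 1 by ring, fallProd_succ (s + 3) x (y + 4 * k),
      fallProd_succ (s + 3) x y]
    obtain ⟨a, ha⟩ := ih y
    obtain ⟨b, hb⟩ := ih (y - 2 ^ (s + 3) * x)
    rw [show y + 4 * k - 2 ^ (s + 3) * x = y - 2 ^ (s + 3) * x + 4 * k by ring,
      eq_add_of_sub_eq ha, eq_add_of_sub_eq hb]
    exact ⟨a * fallProd (s + 3) x (y - 2 ^ (s + 3) * x) + fallProd (s + 3) x y * b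
      + 16 * k * a * b, by ring⟩

/-- Squaring lifts a congruence modulo `16 q` to one modulo `32 q`, so the denominators are
successive squares of the one with eight factors, which is `(1 + x²)² (1 + 4x) + 12 x⁶`
modulo `16`. -/
lemma fallProd_modEq (s : ℕ) (x : R) :
    16 * 2 ^ s ∣ fallProd (s + 3) x 1 - ((1 + x ^ 2) ^ 2 * (1 + 4 * x) + 12 * x ^ 6) ^ 2 ^ s := by
  induction s with
  | zero =>
    refine ⟨-2*x^1 + 20*x^2 - 123*x^3 + 423*x^4 - 821*x^5 + 816*x^6 - 315*x^7, ?_⟩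
    simp only [fallProd, zero_add, show 2 ^ 3 = 8 from rfl, Finset.prod_range_succ,
      Finset.prod_range_zero]
    push_cast
    ring
  | succ s ih =>
    obtain ⟨a, ha⟩ := ih
    obtain ⟨b, hb⟩ := fallProd_shift s x 1 (-(2 * 2 ^ s * x))
    rw [show (1 : R) + 4 * -(2 * 2 ^ s * x) = 1 - 2 ^ (s + 3) * x by ring] at hb
    rw [show s + 1 + 3 = s + 3 + 1 by ring, fallProd_succ, eq_add_of_sub_eq hb,
      eq_add_of_sub_eq ha, pow_succ (2 : ℕ) s, pow_mul, pow_succ (2 : R) s]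
    generalize ((1 + x ^ 2) ^ 2 * (1 + 4 * x) + 12 * x ^ 6) ^ 2 ^ s = T
    exact ⟨a * T + 8 * 2 ^ s * a ^ 2 - x * b * (16 * 2 ^ s * a + T), by ring⟩

/-- Every term of degree at least `3` in the binomial expansion vanishes modulo `16 q`, where
`q = 2^s`. -/
lemma one_add_four_mul_pow (s : ℕ) (u : R) :
    16 * 2 ^ s ∣ (1 + 4 * u) ^ 2 ^ s
      - (1 + 4 * 2 ^ s * u + 8 * 2 ^ s * (2 ^ s - 1) * u ^ 2) := by
  induction s with
  | zero => exact ⟨0, by ring⟩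
  | succ s ih =>
    obtain ⟨a, ha⟩ := ih
    rw [pow_succ (2 : ℕ) s, pow_mul, eq_add_of_sub_eq ha, pow_succ (2 : R) s]
    generalize (2 : R) ^ s = q
    exact ⟨a * (1 + 4 * q * u + 8 * q * (q - 1) * u ^ 2) + 8 * q * a ^ 2
      + 2 * q * (q - 1) * u ^ 3 + 2 * q * (q - 1) ^ 2 * u ^ 4, by ring⟩

lemma one_add_pow_two_pow (s : ℕ) (z : R) :
    4 ∣ (1 + z) ^ (2 * 2 ^ s) - (1 + z ^ 2 ^ s) ^ 2 := by
  induction s with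
  | zero => exact ⟨0, by ring⟩
  | succ s ih =>
    obtain ⟨a, ha⟩ := ih
    rw [pow_succ (2 : ℕ) s, ← mul_assoc, pow_mul, eq_add_of_sub_eq ha, pow_mul z]
    generalize z ^ 2 ^ s = w
    exact ⟨w + w ^ 2 + w ^ 3 + 2 * a * (1 + w) ^ 2 + 4 * a ^ 2, by ring⟩

/-- The inverse `G` of the denominator, modulo `16 q` with `q = 2^s`; here `V = (1 + x²)⁻¹`. All
terms are even in `x` except the last one. -/
lemma inverse_modEq (s : ℕ) (x V G : R) (hV : (1 + x ^ 2) * V = 1)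
    (hG : G * fallProd (s + 3) x 1 = 1) :
    16 * 2 ^ s ∣ G - (V ^ (2 * 2 ^ s) * (1 - 12 * 2 ^ s * x ^ 6 * V ^ 2
      + 8 * 2 ^ s * (2 ^ s + 1) * (x ^ 2 + 9 * x ^ 12 * V ^ 4))
      - 4 * 2 ^ s * (x * V ^ (2 * 2 ^ s))) := by
  obtain ⟨a, ha⟩ := fallProd_modEq s x
  have hV2 : (1 + x ^ 2) ^ 2 * V ^ 2 = 1 := by rw [← mul_pow, hV, one_pow]
  have hfac : (1 + x ^ 2) ^ 2 * (1 + 4 * x) + 12 * x ^ 6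
      = (1 + x ^ 2) ^ 2 * (1 + 4 * (x + 3 * x ^ 6 * V ^ 2)) := by
    linear_combination (-12 * x ^ 6) * hV2
  obtain ⟨b, hb⟩ := one_add_four_mul_pow s (x + 3 * x ^ 6 * V ^ 2)
  rw [hfac, mul_pow, ← pow_mul, eq_add_of_sub_eq hb] at ha
  have hW : (1 + x ^ 2) ^ (2 * 2 ^ s) * V ^ (2 * 2 ^ s) = 1 := by rw [← mul_pow, hV, one_pow]
  generalize hU : x + 3 * x ^ 6 * V ^ 2 = u at *
  generalize (1 + x ^ 2) ^ (2 * 2 ^ s) = W at *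
  generalize V ^ (2 * 2 ^ s) = Y at *
  generalize (2 : R) ^ s = q at *
  have hP := eq_add_of_sub_eq ha
  generalize fallProd (s + 3) x 1 = P at *
  -- `K` is the second-order expansion of `(1 + 4u)^(-q)`.
  set K := 1 - 4 * q * u + 8 * q * (q + 1) * u ^ 2 with hK
  have h1 : 16 * q ∣ G - Y * K := by
    have : P * (Y * K) = 1 + 16 * q * (a * Y * K + b * K
        + (4 * q * u ^ 3 + 4 * q * (q ^ 2 - 1) * u ^ 4)) := by
      rw [hP, hK]
      linear_combination ((1 - 4 * q * u + 8 * q * (q + 1) * u ^ 2)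
        * (16 * q * b + (1 + 4 * q * u + 8 * q * (q - 1) * u ^ 2))) * hW
    refine ⟨-G * (a * Y * K + b * K + (4 * q * u ^ 3 + 4 * q * (q ^ 2 - 1) * u ^ 4)), ?_⟩
    linear_combination (Y * K) * hG - G * this
  obtain ⟨d, hd⟩ := h1
  -- The cross term of `8 q (q + 1) u²` is the only other odd term; its
  -- coefficient `48 q (q + 1)` vanishes modulo `16 q`.
  refine ⟨d + Y * (3 * (q + 1) * x ^ 7 * V ^ 2), ?_⟩
  rw [eq_add_of_sub_eq hd, hK, ← hU]
  ring

end Denominator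

lemma stirling_eq_zero_of_lt (n k : ℕ) (h : n < k) : stirling n k = 0 := by
  induction n generalizing k with
  | zero => obtain ⟨k, rfl⟩ := Nat.exists_eq_succ_of_ne_zero h.ne'; rfl
  | succ n ih =>
    obtain ⟨k, rfl⟩ := Nat.exists_eq_succ_of_ne_zero (Nat.ne_zero_of_lt h)
    simp [stirling, ih k (by omega), ih (k + 1) (by omega)]

lemma stirling_self (k : ℕ) : stirling k k = 1 := by
  induction k with
  | zero => rfl
  | succ k ih => simp [stirling, ih, stirling_eq_zero_of_lt k (k + 1) (by omega)]

/-- The generating function `∑_e S(k + e, k) x^e`. -/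
noncomputable def stirlingSeries (k : ℕ) : ℤ⟦X⟧ :=
  PowerSeries.mk fun e => (stirling (k + e) k : ℤ)

lemma stirlingSeries_mul_prod (k : ℕ) :
    stirlingSeries k * ∏ j ∈ Finset.range (k + 1), ((1 : ℤ⟦X⟧) - (j : ℤ⟦X⟧) * X) = 1 := by
  induction k with
  | zero =>
    simp only [zero_add, Finset.prod_range_one, Nat.cast_zero, zero_mul, sub_zero, mul_one]
    ext e
    cases e <;> simp [stirlingSeries, stirling, coeff_one]
  | succ k ih =>
    rw [Finset.prod_range_succ, mul_comm (∏ j ∈ Finset.range (k + 1), _), ← mul_assoc]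
    convert ih using 2
    rw [mul_sub, mul_one, ← mul_assoc]
    ext e
    have hc : ((k + 1 : ℕ) : ℤ⟦X⟧) = C ((k + 1 : ℕ) : ℤ) := by simp
    rw [map_sub, hc, mul_comm _ (C _), mul_assoc, coeff_C_mul]
    cases e with
    | zero => simp [stirlingSeries, stirling_self]
    | succ e =>
      rw [coeff_succ_mul_X]
      simp only [stirlingSeries, coeff_mk]
      rw [show k + 1 + (e + 1) = (k + 1 + e) + 1 by ring, stirling,
        show k + (e + 1) = k + 1 + e by ring]
      push_cast
      ring

/-- The geometric series `(1 + x)⁻¹`. -/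
noncomputable def invOneAdd : ℤ⟦X⟧ := rescale (-1) (PowerSeries.mk 1)

lemma one_add_mul_invOneAdd : (1 + X) * invOneAdd = 1 := by
  have h := congrArg (rescale (-1 : ℤ)) (mk_one_mul_one_sub_eq_one ℤ)
  rw [map_mul, map_sub, map_one, rescale_neg_one_X, sub_neg_eq_add] at h
  rw [mul_comm]
  exact h

lemma coeff_invOneAdd_sq (i : ℕ) : coeff i (invOneAdd ^ 2) = (-1) ^ i * (i + 1 : ℤ) := by
  have h := mk_one_pow_eq_mk_choose_add ℤ 1
  rw [invOneAdd, ← map_pow, coeff_rescale, h, coeff_mk, Nat.choose_one_right]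
  push_cast
  ring

lemma dvd_coeff (a : ℤ) (f : ℤ⟦X⟧) (h : C a ∣ f) (n : ℕ) : a ∣ coeff n f := by
  obtain ⟨g, rfl⟩ := h
  exact ⟨coeff n g, coeff_C_mul n g a⟩

/-- Modulo `4`, `(1 + x²)^(-2q)` is `(1 + x^(2q))⁻²`, whose coefficients are explicit. -/
lemma coeff_inv_pow (s i : ℕ) (V : ℤ⟦X⟧) (hV : (1 + X ^ 2) * V = 1) :
    (4 : ℤ) ∣ coeff (2 * 2 ^ s * i) (V ^ (2 * 2 ^ s)) - (-1) ^ i * (i + 1 : ℤ) := by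
  have hp : 2 * 2 ^ s ≠ 0 := by positivity
  have hH := congrArg (expand (2 * 2 ^ s) hp) one_add_mul_invOneAdd
  rw [map_mul, map_add, map_one, expand_X] at hH
  have hcoeff : coeff (2 * 2 ^ s * i) (expand (2 * 2 ^ s) hp invOneAdd ^ 2)
      = (-1) ^ i * (i + 1 : ℤ) := by
    rw [← map_pow, coeff_expand_mul, coeff_invOneAdd_sq]
  rw [← hcoeff, ← map_sub]
  apply dvd_coeff
  obtain ⟨a, ha⟩ := one_add_pow_two_pow s ((X : ℤ⟦X⟧) ^ 2)
  rw [← pow_mul] at ha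
  have hW : (1 + (X : ℤ⟦X⟧) ^ 2) ^ (2 * 2 ^ s) * V ^ (2 * 2 ^ s) = 1 := by
    rw [← mul_pow, hV, one_pow]
  rw [eq_add_of_sub_eq ha] at hW
  generalize expand (2 * 2 ^ s) hp invOneAdd = H at *
  generalize V ^ (2 * 2 ^ s) = Y at *
  generalize 1 + (X : ℤ⟦X⟧) ^ (2 * 2 ^ s) = w at *
  have hH2 : w ^ 2 * H ^ 2 = 1 := by rw [← mul_pow, hH, one_pow]
  rw [show C (4 : ℤ) = (4 : ℤ⟦X⟧) from map_ofNat _ 4]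
  exact ⟨-(a * Y * H ^ 2), by linear_combination (-Y) * hH2 + H ^ 2 * hW⟩

theorem stirling_shift_mod (c n m : ℕ) (hc : 0 < c) (hm : 3 ≤ m) (hmn : m ≤ n) :
    stirling (c * 2 ^ n + 2 ^ (m - 1)) (2 ^ m - 1) ≡ 2 ^ (m - 1) [MOD 2 ^ (m + 1)] := by
  obtain ⟨s, rfl⟩ := Nat.exists_eq_add_of_le' hm
  obtain ⟨r, rfl⟩ := Nat.exists_eq_add_of_le' hmn
  obtain ⟨d, hd⟩ : ∃ d, c * 2 ^ r = d + 1 := 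
    Nat.exists_eq_add_of_le' (Nat.mul_pos hc (Nat.two_pow_pos r))
  -- The exponent `N - k` is `2 q i + 1` with `i = 4 c 2^(n-m) - 2`, written `4 d + 2`.
  have hN : c * 2 ^ (r + (s + 3)) + 2 ^ (s + 3 - 1)
      = (2 ^ (s + 3) - 1) + (2 * 2 ^ s * (4 * d + 2) + 1) := by
    have h8 : c * 2 ^ (r + (s + 3)) = (d + 1) * (8 * 2 ^ s) := by rw [← hd]; ring
    rw [h8, show s + 3 - 1 = s + 2 by omega, show 2 ^ (s + 2) = 4 * 2 ^ s by ring,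
      show 2 ^ (s + 3) = 8 * 2 ^ s by ring]
    have : 0 < 2 ^ s := by positivity
    zify [show 1 ≤ 8 * 2 ^ s by omega]
    ring
  have hG := stirlingSeries_mul_prod (2 ^ (s + 3) - 1)
  rw [Nat.sub_add_cancel Nat.one_le_two_pow] at hG
  have hV := congrArg (expand 2 two_ne_zero) one_add_mul_invOneAdd
  rw [map_mul, map_add, map_one, expand_X] at hV
  have hinv := inverse_modEq s X _ _ hV hG
  set E : ℤ⟦X⟧ := invOneAdd ^ (2 * 2 ^ s) * (1 - 12 * 2 ^ s * X ^ 3 * invOneAdd ^ 2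
      + 8 * 2 ^ s * (2 ^ s + 1) * (X + 9 * X ^ 6 * invOneAdd ^ 4)) with hE
  have hexp : expand 2 two_ne_zero invOneAdd ^ (2 * 2 ^ s)
      * (1 - 12 * 2 ^ s * X ^ 6 * expand 2 two_ne_zero invOneAdd ^ 2
      + 8 * 2 ^ s * (2 ^ s + 1) * (X ^ 2 + 9 * X ^ 12 * expand 2 two_ne_zero invOneAdd ^ 4))
      = expand 2 two_ne_zero E := by
    simp only [hE, map_mul, map_add, map_sub, map_pow, map_one, map_ofNat, expand_X, ← pow_mul]
  rw [hexp, show (16 : ℤ⟦X⟧) * 2 ^ s = C (16 * 2 ^ s : ℤ) by simp,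
    show (4 : ℤ⟦X⟧) * 2 ^ s = C (4 * 2 ^ s : ℤ) by simp] at hinv
  have h := dvd_coeff _ _ hinv (2 * 2 ^ s * (4 * d + 2) + 1)
  have hodd : ¬ 2 ∣ 2 * 2 ^ s * (4 * d + 2) + 1 := by
    rw [mul_assoc]; omega
  rw [map_sub, map_sub, coeff_expand_of_not_dvd 2 two_ne_zero E hodd, coeff_C_mul,
    coeff_succ_X_mul, stirlingSeries, coeff_mk, ← hN] at h
  have h4 := coeff_inv_pow s (4 * d + 2) _ hV
  rw [Even.neg_one_pow ⟨2 * d + 1, by ring⟩] at h4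
  obtain ⟨a, ha⟩ := h
  obtain ⟨b, hb⟩ := h4
  rw [eq_add_of_sub_eq hb] at ha
  apply Nat.ModEq.symm
  rw [Nat.modEq_iff_dvd]
  refine ⟨a - b - (d + 1), ?_⟩
  rw [show s + 3 - 1 = s + 2 by omega] at *
  push_cast at ha ⊢
  linear_combination ha
end

section
/- Let c, m, n be positive integers with c odd and 2 ≤ m ≤ n. Then ν₂(S(c·2^{n+1}, 2^m − 1) − S(c·2^n, 2^m − 1)) = n + 1, except when n = m = 2 and c = 1, in which case ν₂(S(8,3) − S(4,3)) = 6. -/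
open Finset

/-! ### The explicit formula -/

/-- The explicit formula for Stirling numbers of the second kind, cleared of its denominator `k!`. -/
lemma factorial_mul_stirling (N : ℕ) : ∀ k : ℕ, ((k.factorial * stirling N k : ℕ) : ℤ) =
    ∑ i ∈ range (k + 1), (-1) ^ (k + i) * (k.choose i : ℤ) * (i : ℤ) ^ N := by
  induction N with
  | zero =>
    intro k
    have h := Int.alternating_sum_range_choose (n := k)
    have h2 : ∑ i ∈ range (k + 1), (-1) ^ (k + i) * (k.choose i : ℤ) * (i : ℤ) ^ 0 =
        (-1) ^ k * ∑ i ∈ range (k + 1), (-1) ^ i * (k.choose i : ℤ) := by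
      rw [mul_sum]
      refine sum_congr rfl fun i _ => ?_
      rw [pow_add]; ring
    rw [h2, h]
    rcases k with _ | k <;> simp [stirling]
  | succ N ih =>
    intro k
    rcases k with _ | k
    · simp [stirling]
    have h1 := ih k
    have h2 := ih (k + 1)
    have key : ((k + 1).factorial * stirling (N + 1) (k + 1) : ℕ) =
        (k + 1) * (k.factorial * stirling N k + (k + 1).factorial * stirling N (k + 1)) := by
      rw [stirling, Nat.factorial_succ]; ring
    rw [key, Nat.cast_mul, Nat.cast_add (k.factorial * _), h1, h2, sum_range_succ _ (k + 1),
      sum_range_succ _ (k + 1), mul_add, mul_add, ← add_assoc, mul_sum, mul_sum, ← sum_add_distrib]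
    congr 1
    · refine sum_congr rfl fun i hi => ?_
      have hi' : i ≤ k := Nat.lt_succ_iff.mp (mem_range.mp hi)
      have hc := Nat.choose_mul_succ_eq k i
      zify [show i ≤ k + 1 by omega] at hc
      have e : (-1 : ℤ) ^ (k + 1 + i) = - (-1) ^ (k + i) := by ring
      rw [e, pow_succ]
      push_cast
      linear_combination (-1 : ℤ) ^ (k + i) * (i : ℤ) ^ N * hc
    · push_cast; ring

/-! ### Valuations of factorials and binomial coefficients -/

/-- The binomial coefficients `C(c·2^a - 1, j)` with `j < 2^a` are odd: by Pascal's rule consecutive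
ones have an even sum `C(c·2^a, j + 1)`. -/
lemma odd_choose_mul_two_pow_sub_one {c : ℕ} (hc : 0 < c) (a : ℕ) :
    ∀ {j : ℕ}, j < 2 ^ a → Odd ((c * 2 ^ a - 1).choose j) := by
  intro j
  obtain ⟨x, hx⟩ : ∃ x, c * 2 ^ a = x + 1 := 
    ⟨c * 2 ^ a - 1, (Nat.sub_add_cancel (by positivity : 0 < c * 2 ^ a)).symm⟩
  rw [hx, Nat.add_sub_cancel]
  induction j with
  | zero => intro _; simp
  | succ j ih =>
    intro hj
    have h1 := ih (by omega)
    have h2 : Even ((x + 1).choose (j + 1)) := by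
      have h := Nat.add_one_mul_choose_eq x j
      rw [← hx] at h
      by_contra ho
      rw [Nat.not_even_iff_odd] at ho
      have hd : 2 ^ a ∣ (c * 2 ^ a).choose (j + 1) * (j + 1) := ⟨c * x.choose j, by rw [← h]; ring⟩
      rw [← hx] at ho
      have hcop : Nat.Coprime (2 ^ a) ((c * 2 ^ a).choose (j + 1)) :=
        Nat.Coprime.pow_left _ ho.coprime_two_left
      have := Nat.le_of_dvd (by omega) (hcop.dvd_of_dvd_mul_left hd)
      omega
    rw [Nat.choose_succ_succ, Nat.even_add'] at h2
    exact h2.1 h1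

lemma fact_odd (n : ℕ) : padicValNat 2 (2 * n + 1).factorial = padicValNat 2 (2 * n).factorial := by
  exact padicValNat_factorial_mul_add n (p := 2) (by norm_num)

/-- Legendre's formula without carries: if `C(a + b, a)` is odd, `ν₂((a + b)!)` is additive. -/
lemma fact_add {a b : ℕ} (h : Odd ((a + b).choose a)) :
    padicValNat 2 (a + b).factorial = padicValNat 2 a.factorial + padicValNat 2 b.factorial := by
  have hc := Nat.choose_mul_factorial_mul_factorial (Nat.le_add_right a b)
  rw [Nat.add_sub_cancel_left] at hc
  have h0 : (a + b).choose a ≠ 0 := h.pos.ne'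
  rw [← hc, padicValNat.mul (mul_ne_zero h0 a.factorial_ne_zero) b.factorial_ne_zero,
    padicValNat.mul h0 a.factorial_ne_zero,
    padicValNat.eq_zero_of_not_dvd h.not_two_dvd_nat, zero_add]

/-- `ν₂((2^m - 1)!) = 2^m - 1 - m`. -/
lemma fact_two_pow (m : ℕ) : padicValNat 2 (2 ^ m - 1).factorial + m = 2 ^ m - 1 := by
  induction m with
  | zero => simp
  | succ m ih =>
    have e : 2 ^ (m + 1) - 1 = 2 * (2 ^ m - 1) + 1 := by
      have := Nat.one_le_two_pow (n := m); omega
    rw [e, fact_odd, padicValNat_factorial_mul]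
    omega

lemma exists_odd_of_padicValNat {x r : ℕ} (hx : x ≠ 0) (h : padicValNat 2 x = r) :
    ∃ o, Odd o ∧ x = 2 ^ r * o := by
  obtain ⟨k, o, ho, rfl⟩ := Nat.exists_eq_two_pow_mul_odd hx
  have : padicValNat 2 (2 ^ k * o) = k := by
    rw [padicValNat.mul (by positivity) ho.pos.ne', padicValNat.prime_pow,
      padicValNat.eq_zero_of_not_dvd ho.not_two_dvd_nat, add_zero]
  exact ⟨o, ho, by rw [← h, this]⟩

/-- The exact 2-adic valuation of `(r + 1)! · C(2^m - 2 - r, r)` is `r`. All factorials occurring in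
it are reduced to those of `r` and `2r` by reflection `j ↦ 2^m - 1 - j`, which is additive on valuations
because `C(2^m - 1, j)` is odd. -/
lemma factorial_mul_choose {m r : ℕ} (hr : 2 * r + 1 < 2 ^ m) :
    ∃ o, Odd o ∧ (r + 1).factorial * (2 ^ m - 2 - r).choose r = 2 ^ r * o := by
  have hodd : ∀ j < 2 ^ m, Odd ((2 ^ m - 1).choose j) := fun j hj => by
    simpa using odd_choose_mul_two_pow_sub_one one_pos m hj
  have hpos : (2 ^ m - 2 - r).choose r ≠ 0 := (Nat.choose_pos (by omega)).ne'
  apply exists_odd_of_padicValNat (mul_ne_zero (Nat.factorial_ne_zero _) hpos)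
  rw [padicValNat.mul (Nat.factorial_ne_zero _) hpos]
  have h1 := congrArg (padicValNat 2) (Nat.choose_mul_factorial_mul_factorial
    (n := 2 ^ m - 2 - r) (k := r) (by omega))
  rw [padicValNat.mul (mul_ne_zero hpos (Nat.factorial_ne_zero _)) (Nat.factorial_ne_zero _),
    padicValNat.mul hpos (Nat.factorial_ne_zero _)] at h1
  have h2 := fact_add (a := r + 1) (b := 2 ^ m - 2 - r) (by
    rw [show r + 1 + (2 ^ m - 2 - r) = 2 ^ m - 1 by omega]; exact hodd _ (by omega))
  have h3 := fact_add (a := 2 * r) (b := 2 ^ m - 1 - 2 * r) (by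
    rw [show 2 * r + (2 ^ m - 1 - 2 * r) = 2 ^ m - 1 by omega]; exact hodd _ (by omega))
  rw [show r + 1 + (2 ^ m - 2 - r) = 2 ^ m - 1 by omega] at h2
  rw [show 2 * r + (2 ^ m - 1 - 2 * r) = 2 ^ m - 1 by omega] at h3
  obtain ⟨y, hy⟩ : ∃ y, 2 ^ m = 2 * y := by
    rcases m with _ | m
    · simp at hr
    · exact ⟨2 ^ m, by ring⟩
  have h4 := fact_odd (y - 1 - r)
  rw [show 2 * (y - 1 - r) + 1 = 2 ^ m - 1 - 2 * r by omega,
    show 2 * (y - 1 - r) = 2 ^ m - 2 - r - r by omega] at h4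
  have h5 := padicValNat_factorial_mul (p := 2) r
  omega

/-! ### Moriarty's identity -/

/-- A three-term recurrence in `n` for `∑ j, C(n, 2j+1) C(j, r)`, obtained by summation by parts; the
extra summand on the left is the boundary term. -/
lemma moriarty_step (J n r : ℕ) :
    ∑ j ∈ range (J + 1), (n + 2).choose (2 * j + 1) * j.choose (r + 1) +
      n.choose (2 * J + 1) * (J + 1).choose (r + 1) =
    2 * ∑ j ∈ range (J + 1), (n + 1).choose (2 * j + 1) * j.choose (r + 1) +
      ∑ j ∈ range (J + 1), n.choose (2 * j + 1) * j.choose r := by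
  induction J with
  | zero => rcases r with _ | r <;> simp [Nat.choose_succ_succ]
  | succ J ih =>
    rw [sum_range_succ _ (J + 1), sum_range_succ _ (J + 1), sum_range_succ _ (J + 1)]
    have e : 2 * (J + 1) + 1 = 2 * J + 1 + 1 + 1 := by ring
    rw [e]
    have h1 : (n + 2).choose (2 * J + 1 + 1 + 1) =
        n.choose (2 * J + 1) + 2 * n.choose (2 * J + 1 + 1) + n.choose (2 * J + 1 + 1 + 1) := by
      rw [Nat.choose_succ_succ, Nat.choose_succ_succ, Nat.choose_succ_succ n (2 * J + 1 + 1)]; ring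
    rw [h1, Nat.choose_succ_succ n (2 * J + 1 + 1), Nat.choose_succ_succ (J + 1) r]
    linear_combination ih

/-- The analogue of `moriarty_step` for `r = 0`. -/
lemma moriarty_step_zero (J n : ℕ) :
    ∑ j ∈ range (J + 1), (n + 2).choose (2 * j + 1) + n.choose (2 * J + 1) =
    2 * ∑ j ∈ range (J + 1), (n + 1).choose (2 * j + 1) := by
  induction J with
  | zero => simp; ring
  | succ J ih =>
    rw [sum_range_succ _ (J + 1), sum_range_succ _ (J + 1)]
    have e : 2 * (J + 1) + 1 = 2 * J + 1 + 1 + 1 := by ring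
    rw [e]
    have h1 : (n + 2).choose (2 * J + 1 + 1 + 1) =
        n.choose (2 * J + 1) + 2 * n.choose (2 * J + 1 + 1) + n.choose (2 * J + 1 + 1 + 1) := by
      rw [Nat.choose_succ_succ, Nat.choose_succ_succ, Nat.choose_succ_succ n (2 * J + 1 + 1)]; ring
    rw [h1, Nat.choose_succ_succ n (2 * J + 1 + 1)]
    linear_combination ih

/-- Moriarty's identity `∑ j, C(n, 2j+1) C(j, r) = 2^(n-1-2r) C(n-1-r, r)`, shifted by one in `n` and
multiplied by `4^r`. The truncated subtraction is harmless: for `r > n` both sides vanish. -/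
lemma moriarty (J n : ℕ) : n ≤ 2 * J → ∀ r,
    4 ^ r * ∑ j ∈ range (J + 1), (n + 1).choose (2 * j + 1) * j.choose r =
      2 ^ n * (n - r).choose r := by
  induction n using Nat.twoStepInduction with
  | zero =>
    intro _ r
    rw [sum_eq_single 0]
    · rcases r with _ | r <;> simp
    · intro j _ hj; rw [Nat.choose_eq_zero_of_lt (by omega)]; simp
    · simp
  | one =>
    intro _ r
    rw [sum_eq_single 0]
    · rcases r with _ | r <;> simp
    · intro j _ hj; rw [Nat.choose_eq_zero_of_lt (by omega)]; simp
    · simp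
  | more n ih0 ih1 =>
    intro hn r
    rcases r with _ | r
    · have h := moriarty_step_zero J (n + 1)
      have h1 := ih1 (by omega) 0
      rw [Nat.choose_eq_zero_of_lt (by omega : n + 1 < 2 * J + 1)] at h
      simp only [Nat.choose_zero_right, mul_one, pow_zero, one_mul] at h1 ⊢
      rw [add_zero] at h
      rw [h, h1]; ring
    · have h := moriarty_step J (n + 1) r
      have h0 := ih0 (by omega) r
      have h1 := ih1 (by omega) (r + 1)
      rw [Nat.choose_eq_zero_of_lt (by omega : n + 1 < 2 * J + 1), zero_mul, add_zero] at h
      rw [h, mul_add]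
      have e : (n + 2 - (r + 1)).choose (r + 1) =
          (n - r).choose r + (n + 1 - (r + 1)).choose (r + 1) := by
        rcases Nat.lt_or_ge n r with hlt | hge
        · rw [show n + 2 - (r + 1) = 0 by omega, show n - r = 0 by omega,
            show n + 1 - (r + 1) = 0 by omega]
          rw [Nat.choose_eq_zero_of_lt (by omega : 0 < r)]; simp
        · rw [show n + 2 - (r + 1) = n - r + 1 by omega, show n + 1 - (r + 1) = n - r by omega]
          rfl
      rw [e]
      linear_combination 2 * h1 + 4 * h0

/-! ### Central factorial moments -/

/-- The sum `∑ j, C(k, 2j+1) C(j, r)` for `k = 2J + 1`. -/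
def oddSum (J r : ℕ) : ℕ := ∑ j ∈ range (J + 1), (2 * J + 1).choose (2 * j + 1) * j.choose r

lemma oddSum_eq_zero {J r : ℕ} (h : J < r) : oddSum J r = 0 :=
  sum_eq_zero fun j hj => by
    rw [Nat.choose_eq_zero_of_lt (n := j) (by have := mem_range.mp hj; omega), mul_zero]

/-- The exact 2-adic valuation of `2^r (r + 1)! · oddSum J r` is `2J`. -/
lemma two_pow_mul_oddSum {m J r : ℕ} (hJ : 2 ^ m = 2 * J + 2) (hr : r ≤ J) :
    ∃ o, Odd o ∧ 2 ^ r * (r + 1).factorial * oddSum J r = 2 ^ (2 * J) * o := by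
  obtain ⟨o, ho, h⟩ := factorial_mul_choose (m := m) (r := r) (by omega)
  rw [show 2 ^ m - 2 - r = 2 * J - r by omega] at h
  have h1 := moriarty J (2 * J) le_rfl r
  refine ⟨o, ho, Nat.eq_of_mul_eq_mul_left (pow_pos (by norm_num : 0 < 2) r) ?_⟩
  have h4 : (4 : ℕ) ^ r = 2 ^ r * 2 ^ r := by rw [← mul_pow]; norm_num
  rw [h4] at h1
  unfold oddSum
  linear_combination (r + 1).factorial * h1 + 2 ^ (2 * J) * h

lemma two_pow_dvd_oddSum {m J : ℕ} (hJ : 2 ^ m = 2 * J + 2) (r : ℕ) :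
    2 ^ (2 * J) ∣ 2 ^ r * (r + 1).factorial * oddSum J r := by
  rcases Nat.lt_or_ge J r with h | h
  · simp [oddSum_eq_zero h]
  · obtain ⟨o, -, h⟩ := two_pow_mul_oddSum hJ h
    exact ⟨o, h⟩

/-- The moment `∑ j, C(k, 2j+1) · (j(j+1))^s · (j+q)(j+q-1)⋯(j-q+1)` for `k = 2J + 1`. The last
factor, a central factorial, is a polynomial of degree `q` in `j(j+1)`. -/
def moment (J s q : ℕ) : ℕ :=
  ∑ j ∈ range (J + 1), (2 * J + 1).choose (2 * j + 1) * ((j * (j + 1)) ^ s *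
    (j + q).descFactorial (2 * q))

/-- The central factorials `P_q(j) = (j+q)(j+q-1)⋯(j-q+1)` satisfy
`j(j+1) P_q = P_{q+1} + q(q+1) P_q`. -/
lemma descFactorial_rec (j q : ℕ) :
    j * (j + 1) * (j + q).descFactorial (2 * q) =
      (j + (q + 1)).descFactorial (2 * (q + 1)) + q * (q + 1) * (j + q).descFactorial (2 * q) := by
  rw [show 2 * (q + 1) = 2 * q + 1 + 1 by ring, ← add_assoc, Nat.succ_descFactorial_succ,
    Nat.descFactorial_succ]
  rcases Nat.lt_or_ge j q with h | h
  · rw [Nat.descFactorial_of_lt (by omega : j + q < 2 * q)]; simp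
  · obtain ⟨d, rfl⟩ := Nat.exists_eq_add_of_le h
    rw [show q + d + q - 2 * q = d by omega]
    ring

lemma moment_succ (J s q : ℕ) :
    moment J (s + 1) q = moment J s (q + 1) + q * (q + 1) * moment J s q := by
  unfold moment
  rw [mul_sum, ← sum_add_distrib]
  refine sum_congr rfl fun j _ => ?_
  linear_combination (2 * J + 1).choose (2 * j + 1) * (j * (j + 1)) ^ s * descFactorial_rec j q

/-- Expansion of the pure central factorial moment by Vandermonde's identity
`C(j+q, 2q) = ∑ v, C(q, v) C(j, 2q-v)`, with the summand `v = 0` split off and `v` shifted by one in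
the rest. -/
lemma moment_zero (J q : ℕ) :
    4 ^ q * moment J 0 q = ∑ v ∈ range (2 * q),
      q.choose (v + 1) * (4 ^ q * (2 * q).factorial * oddSum J (2 * q - (v + 1))) +
        4 ^ q * (2 * q).factorial * oddSum J (2 * q) := by
  have h : moment J 0 q = ∑ v ∈ range (2 * q + 1),
      q.choose v * ((2 * q).factorial * oddSum J (2 * q - v)) := by
    unfold moment oddSum
    simp_rw [mul_sum (range (J + 1))]
    rw [sum_comm]
    refine sum_congr rfl fun j _ => ?_
    rw [Nat.descFactorial_eq_factorial_mul_choose, add_comm j q, Nat.add_choose_eq q j (2 * q),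
      Finset.Nat.sum_antidiagonal_eq_sum_range_succ_mk]
    simp only [mul_sum]
    refine sum_congr rfl fun v _ => ?_
    ring
  rw [h, sum_range_succ', mul_add, mul_sum]
  congr 1
  · exact sum_congr rfl fun v _ => by ring
  · simp; ring

/-- The summand of index `v + 1` in `moment_zero` gains a factor `2^(v + 1)` over the term of
index `0`. -/
lemma dvd_term {m J q v : ℕ} (hJ : 2 ^ m = 2 * J + 2) (hv : v < 2 * q) :
    2 ^ (2 * J + v + 1) ∣ 4 ^ q * (2 * q).factorial * oddSum J (2 * q - (v + 1)) := by
  have h := two_pow_dvd_oddSum hJ (2 * q - (v + 1))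
  obtain ⟨f, hf⟩ : (2 * q - (v + 1) + 1).factorial ∣ (2 * q).factorial :=
    Nat.factorial_dvd_factorial (by omega)
  have e : (4 : ℕ) ^ q = 2 ^ (v + 1) * 2 ^ (2 * q - (v + 1)) := by
    rw [← pow_add, show v + 1 + (2 * q - (v + 1)) = 2 * q by omega, pow_mul]; norm_num
  rw [hf, e, show 2 * J + v + 1 = (v + 1) + 2 * J by ring, pow_add]
  have := (mul_dvd_mul_left (2 ^ (v + 1)) h).mul_right f
  exact this.trans (dvd_of_eq (by ring))

/-- For `2q ≤ J` the summand without shift in `moment_zero` alone determines the valuation of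
`4^q · moment J 0 q`. -/
lemma moment_zero_odd {m J q : ℕ} (hJ : 2 ^ m = 2 * J + 2) (hq : 2 * q ≤ J) :
    ∃ o, Odd o ∧ 4 ^ q * moment J 0 q = 2 ^ (2 * J) * o := by
  obtain ⟨o, ho, h⟩ := two_pow_mul_oddSum hJ hq
  rw [pow_mul, show 2 ^ 2 = 4 from rfl, Nat.factorial_succ] at h
  have hodd : Odd (2 * q + 1) := ⟨q, rfl⟩
  have hd : 2 ^ (2 * J) ∣ 4 ^ q * (2 * q).factorial * oddSum J (2 * q) := by
    refine (Nat.Coprime.pow_left (2 * J) hodd.coprime_two_left).dvd_of_dvd_mul_left ⟨o, ?_⟩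
    rw [← h]; ring
  obtain ⟨x, hx⟩ := hd
  have hxo : Odd x := by
    have : (2 * q + 1) * x = o := by
      apply Nat.eq_of_mul_eq_mul_left (pow_pos (by norm_num : 0 < 2) (2 * J))
      rw [← h]
      calc 2 ^ (2 * J) * ((2 * q + 1) * x) = (2 * q + 1) * (2 ^ (2 * J) * x) := by ring
        _ = _ := by rw [← hx]; ring
    rw [← this] at ho
    exact (Nat.odd_mul.mp ho).2
  have hrest : 2 ^ (2 * J + 1) ∣ ∑ v ∈ range (2 * q),
      q.choose (v + 1) * (4 ^ q * (2 * q).factorial * oddSum J (2 * q - (v + 1))) :=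
    dvd_sum fun v hv => ((pow_dvd_pow 2 (by omega)).trans
      (dvd_term hJ (mem_range.mp hv))).mul_left _
  obtain ⟨y, hy⟩ := hrest
  refine ⟨2 * y + x, (even_two_mul y).add_odd hxo, ?_⟩
  rw [moment_zero, hy, hx]; ring

/-- For `2q > J` the summand `oddSum J (2q)` vanishes, and a factor `2` is gained. -/
lemma moment_zero_dvd_of_lt {m J q : ℕ} (hJ : 2 ^ m = 2 * J + 2) (hq : J < 2 * q) :
    2 ^ (2 * J + 1) ∣ 4 ^ q * moment J 0 q := by
  rw [moment_zero, oddSum_eq_zero hq, mul_zero, add_zero]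
  exact dvd_sum fun v hv => ((pow_dvd_pow 2 (by omega)).trans
      (dvd_term hJ (mem_range.mp hv))).mul_left _

/-- If moreover `q` is even, the coefficient `C(q, 1)` of the leading remaining summand is even, and
a factor `4` is gained. -/
lemma moment_zero_dvd_of_even {m J q : ℕ} (hJ : 2 ^ m = 2 * J + 2) (hq : J < 2 * q)
    (he : Even q) : 2 ^ (2 * J + 2) ∣ 4 ^ q * moment J 0 q := by
  rw [moment_zero, oddSum_eq_zero hq, mul_zero, add_zero]
  refine dvd_sum fun v hv => ?_
  have h := dvd_term hJ (mem_range.mp hv)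
  rcases v with _ | v
  · rw [zero_add, Nat.choose_one_right, pow_succ, mul_comm]
    exact mul_dvd_mul he.two_dvd h
  · exact ((pow_dvd_pow 2 (by omega)).trans h).mul_left _

lemma moment_zero_dvd {m J : ℕ} (hJ : 2 ^ m = 2 * J + 2) (q : ℕ) :
    2 ^ (2 * J) ∣ 4 ^ q * moment J 0 q := by
  rcases Nat.lt_or_ge J (2 * q) with h | h
  · exact (pow_dvd_pow 2 (by omega)).trans (moment_zero_dvd_of_lt hJ h)
  · obtain ⟨o, -, h⟩ := moment_zero_odd hJ h
    exact ⟨o, h⟩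

/-- Powers of `j(j+1)` may be replaced by central factorials: each step of the recurrence
`moment_succ` produces an error term carrying an extra factor `4`. -/
lemma moment_modEq {m J : ℕ} (hJ : 2 ^ m = 2 * J + 2) (s : ℕ) : ∀ q,
    4 ^ (s + q) * moment J s q ≡ 4 ^ (s + q) * moment J 0 (s + q) [MOD 2 ^ (2 * J + 2)] := by
  induction s with
  | zero => intro q; simp [Nat.ModEq]
  | succ s ih =>
    intro q
    have h0 : 2 ^ (2 * J) ∣ 4 ^ (s + q) * moment J s q :=
      ((ih q).dvd_iff (pow_dvd_pow 2 (by omega))).mpr (moment_zero_dvd hJ _)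
    have h1 : q * (q + 1) * (4 * (4 ^ (s + q) * moment J s q)) ≡ 0 [MOD 2 ^ (2 * J + 2)] := by
      rw [Nat.modEq_zero_iff_dvd, pow_add, mul_comm (2 ^ (2 * J))]
      exact (mul_dvd_mul_left 4 h0).mul_left _
    have h2 := (ih (q + 1)).add h1
    rw [show s + 1 + q = s + (q + 1) by ring, moment_succ]
    rw [add_zero] at h2
    convert h2 using 1
    ring

/-! ### Power sums -/

/-- The sum `∑ j, C(k, 2j+1) · (4j(j+1))^s` for `k = 2J + 1`, where `4j(j+1) = (2j+1)² - 1`. -/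
def powSum (J s : ℕ) : ℕ :=
  ∑ j ∈ range (J + 1), (2 * J + 1).choose (2 * j + 1) * (4 * (j * (j + 1))) ^ s

lemma powSum_modEq {m J : ℕ} (hJ : 2 ^ m = 2 * J + 2) (s : ℕ) :
    powSum J s ≡ 4 ^ s * moment J 0 s [MOD 2 ^ (2 * J + 2)] := by
  have h := moment_modEq hJ s 0
  rw [add_zero] at h
  convert h using 1
  rw [powSum, moment, mul_sum]
  refine sum_congr rfl fun j _ => ?_
  simp [mul_pow]; ring

lemma eight_pow_dvd_powSum (J s : ℕ) : 2 ^ (3 * s) ∣ powSum J s := by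
  refine dvd_sum fun j _ => Dvd.dvd.mul_left ?_ _
  rw [pow_mul]
  refine pow_dvd_pow_of_dvd ?_ s
  exact mul_dvd_mul_left 4 (Nat.even_mul_succ_self j).two_dvd

/-- For `s = 2^p`, where `2J + 2 = 2^(p+3)`, the valuation of `powSum J s` is exactly `2J`. This is
the term that determines the valuation of the difference of Stirling numbers. -/
lemma powSum_main {p J : ℕ} (hJ : J + 1 = 4 * 2 ^ p) :
    ∃ o, Odd o ∧ powSum J (2 ^ p) = 2 ^ (2 * J) * o := by
  have hm : 2 ^ (p + 3) = 2 * J + 2 := by rw [pow_add]; omega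
  have hp := Nat.one_le_two_pow (n := p)
  obtain ⟨o, ho, h⟩ := moment_zero_odd (q := 2 ^ p) hm (by omega)
  have hmod := powSum_modEq hm (2 ^ p)
  have hd : 2 ^ (2 * J) ∣ powSum J (2 ^ p) :=
    (hmod.dvd_iff (pow_dvd_pow 2 (by omega))).mpr ⟨o, h⟩
  obtain ⟨x, hx⟩ := hd
  refine ⟨x, ?_, hx⟩
  rw [h, hx, pow_add] at hmod
  have := Nat.ModEq.mul_left_cancel' (by positivity) hmod
  have h2 := this.of_dvd (by norm_num : 2 ∣ 2 ^ 2)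
  rw [Nat.odd_iff] at ho ⊢
  have h3 : x % 2 = o % 2 := h2
  omega

/-- For every positive `s = 2^e · o` other than `2^p`, the valuation of `powSum J s` is at least
`2J + 1 - p + ν₂(s)`. At `s = 2^p` this bound would read `2J + 1` and miss the true value by one. -/
lemma powSum_dvd {p J e o : ℕ} (hJ : J + 1 = 4 * 2 ^ p) (ho : Odd o) (hs : 2 ^ e * o ≠ 2 ^ p) :
    2 ^ (8 * 2 ^ p - p - 1 + e) ∣ powSum J (2 ^ e * o) := by
  have hm : 2 ^ (p + 3) = 2 * J + 2 := by rw [pow_add]; omega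
  have hp : p < 2 ^ p := Nat.lt_two_pow_self
  have he : e < 2 ^ e := Nat.lt_two_pow_self
  have hes : 2 ^ e ≤ 2 ^ e * o := Nat.le_mul_of_pos_right _ ho.pos
  have hmod := powSum_modEq hm (2 ^ e * o)
  rcases Nat.lt_or_ge (2 ^ e * o) (4 * 2 ^ p) with h4 | h4
  swap
  -- For `s ≥ 2^(p+2)` the trivial bound suffices, each summand being divisible by `8^s`.
  · exact (pow_dvd_pow 2 (by omega)).trans (eight_pow_dvd_powSum J _)
  have hep : e ≤ p + 1 := by
    by_contra hc
    have : 2 ^ (p + 2) ≤ 2 ^ e := Nat.pow_le_pow_right (by norm_num) (by omega)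
    rw [pow_add] at this; omega
  rcases Nat.lt_or_ge (2 ^ e * o) (2 * 2 ^ p) with h2 | h2
  -- Here `s < 2^(p+1)` and `s ≠ 2^p`, so `2^p` cannot divide `s`.
  · have hlt : e < p := by
      by_contra hc
      have h1 : 2 ^ p ≤ 2 ^ e := Nat.pow_le_pow_right (by norm_num) (by omega)
      have ho1 : o = 1 := by
        have : o < 2 := by
          by_contra hc2
          have := Nat.mul_le_mul h1 (not_lt.mp hc2)
          omega
        have := ho.pos
        omega
      subst ho1
      rcases (show e = p ∨ e = p + 1 by omega) with rfl | rfl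
      · simp at hs
      · rw [pow_succ] at h2; omega
    refine (hmod.dvd_iff (pow_dvd_pow 2 (by omega))).mpr ?_
    exact (pow_dvd_pow 2 (by omega)).trans (moment_zero_dvd hm _)
  -- Here `2^(p+1) ≤ s < 2^(p+2)`, and `e = p + 1` forces `s = 2^(p+1)`, which is even.
  · rcases (show e ≤ p ∨ e = p + 1 by omega) with hle | rfl
    · refine (hmod.dvd_iff (pow_dvd_pow 2 (by omega))).mpr ?_
      exact (pow_dvd_pow 2 (by omega)).trans (moment_zero_dvd_of_lt hm (by omega))
    · refine (hmod.dvd_iff (pow_dvd_pow 2 (by omega))).mpr ?_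
      refine (pow_dvd_pow 2 (by omega)).trans (moment_zero_dvd_of_even hm (by omega) ?_)
      rw [pow_succ, mul_right_comm]
      exact even_two.mul_left _

/-! ### The odd indices -/

/-- The coefficient of `x^s` in `(1 + x)^(2M) - (1 + x)^M`. -/
def chooseDiff (M s : ℕ) : ℤ := ((2 * M).choose s : ℤ) - (M.choose s : ℤ)

/-- Absorption: `s · chooseDiff M s` is a multiple of `M`. -/
lemma mul_chooseDiff {M s : ℕ} (hM : 0 < M) :
    ((s + 1 : ℕ) : ℤ) * chooseDiff M (s + 1) =
      M * (2 * ((2 * M - 1).choose s : ℤ) - ((M - 1).choose s : ℤ)) := by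
  obtain ⟨x, rfl⟩ : ∃ x, M = x + 1 := ⟨M - 1, by omega⟩
  have h1 := Nat.add_one_mul_choose_eq x s
  have h2 := Nat.add_one_mul_choose_eq (2 * x + 1) s
  rw [show 2 * x + 1 + 1 = 2 * (x + 1) by ring] at h2
  rw [chooseDiff, show 2 * (x + 1) - 1 = 2 * x + 1 by omega, Nat.add_sub_cancel]
  zify at h1 h2
  push_cast at h1 h2 ⊢
  linear_combination h1 - h2

/-- The odd indices `i = 2j + 1` in the explicit formula for `S(4M, k) - S(2M, k)`: the binomial
theorem is applied to `i² = 1 + 4j(j+1)`. -/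
lemma oddPart_eq (J M : ℕ) :
    ∑ j ∈ range (J + 1), ((2 * J + 1).choose (2 * j + 1) : ℤ) *
        ((2 * j + 1 : ℤ) ^ (4 * M) - (2 * j + 1 : ℤ) ^ (2 * M)) =
      ∑ s ∈ range (2 * M + 1), chooseDiff M s * powSum J s := by
  have key : ∀ (u : ℤ) (L : ℕ), L ≤ 2 * M → (u + 1) ^ L =
      ∑ s ∈ range (2 * M + 1), (L.choose s : ℤ) * u ^ s := by
    intro u L hL
    rw [add_pow]
    refine sum_subset_zero_on_sdiff (range_subset_range.mpr (by omega)) ?_ ?_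
    · intro s hs
      have : L < s := by
        simp only [mem_sdiff, mem_range] at hs; omega
      simp [Nat.choose_eq_zero_of_lt this]
    · intro s _; simp [mul_comm]
  have hterm : ∀ j : ℕ, (2 * j + 1 : ℤ) ^ (4 * M) - (2 * j + 1 : ℤ) ^ (2 * M) =
      ∑ s ∈ range (2 * M + 1), chooseDiff M s * (4 * ((j : ℤ) * (j + 1))) ^ s := by
    intro j
    rw [show 4 * M = 2 * (2 * M) by ring, pow_mul, pow_mul (2 * j + 1 : ℤ) 2 M,
      show (2 * j + 1 : ℤ) ^ 2 = 4 * ((j : ℤ) * (j + 1)) + 1 by ring,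
      key _ (2 * M) le_rfl, key _ M (by omega), ← sum_sub_distrib]
    exact sum_congr rfl fun s _ => by rw [chooseDiff]; ring
  simp_rw [hterm, powSum]
  push_cast
  simp_rw [mul_sum]
  rw [sum_comm]
  exact sum_congr rfl fun s _ => sum_congr rfl fun j _ => by ring

lemma dvd_chooseDiff_mul_powSum {c p t J s : ℕ} (hc : 0 < c) (hJ : J + 1 = 4 * 2 ^ p)
    (hs0 : s ≠ 0) (hs : s ≠ 2 ^ p) :
    (2 : ℤ) ^ (8 * 2 ^ p - p - 1 + t) ∣ chooseDiff (c * 2 ^ t) s * powSum J s := by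
  obtain ⟨e, o, ho, rfl⟩ := Nat.exists_eq_two_pow_mul_odd hs0
  have h1 : (2 : ℤ) ^ (8 * 2 ^ p - p - 1 + e) ∣ (powSum J (2 ^ e * o) : ℤ) := by
    exact_mod_cast powSum_dvd hJ ho hs
  obtain ⟨s, hs1⟩ : ∃ s, 2 ^ e * o = s + 1 := ⟨2 ^ e * o - 1, by omega⟩
  have h2 := mul_chooseDiff (M := c * 2 ^ t) (s := s) (by positivity)
  rw [← hs1] at h2
  have h3 : (2 : ℤ) ^ t ∣ 2 ^ e * chooseDiff (c * 2 ^ t) (2 ^ e * o) := by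
    have hcop : IsCoprime ((2 : ℤ) ^ t) (o : ℤ) := by
      apply IsCoprime.pow_left
      rw [Int.isCoprime_iff_gcd_eq_one]
      exact_mod_cast ho.coprime_two_left
    refine hcop.dvd_of_dvd_mul_left ?_
    have : (o : ℤ) * (2 ^ e * chooseDiff (c * 2 ^ t) (2 ^ e * o)) =
      ((2 ^ e * o : ℕ) : ℤ) * chooseDiff (c * 2 ^ t) (2 ^ e * o) := by push_cast; ring
    rw [this, h2]
    push_cast
    exact Dvd.dvd.mul_right (Dvd.intro_left _ rfl) _
  have h4 := mul_dvd_mul h3 h1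
  rw [← mul_dvd_mul_iff_left (pow_ne_zero e (two_ne_zero : (2 : ℤ) ≠ 0))]
  convert h4 using 1
  · rw [← pow_add, ← pow_add]; congr 1; omega
  · ring

lemma chooseDiff_main {c p t : ℕ} (hc : Odd c) (hpt : p ≤ t) :
    ∃ o : ℤ, Odd o ∧ chooseDiff (c * 2 ^ t) (2 ^ p) = 2 ^ (t - p) * o := by
  obtain ⟨s, hs⟩ : ∃ s, 2 ^ p = s + 1 := ⟨2 ^ p - 1, by have := Nat.one_le_two_pow (n := p); omega⟩
  have h := mul_chooseDiff (M := c * 2 ^ t) (s := s) (by have := hc.pos; positivity)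
  have hst : s < 2 ^ t := by
    have : 2 ^ p ≤ 2 ^ t := Nat.pow_le_pow_right (by norm_num) hpt
    omega
  have hodd := odd_choose_mul_two_pow_sub_one hc.pos t hst
  refine ⟨c * (2 * ((2 * (c * 2 ^ t) - 1).choose s : ℤ) - ((c * 2 ^ t - 1).choose s : ℤ)), ?_, ?_⟩
  · refine Odd.mul (by exact_mod_cast hc) ((even_two_mul _).sub_odd (by exact_mod_cast hodd))
  · rw [← hs] at h
    apply mul_left_cancel₀ (pow_ne_zero p (two_ne_zero : (2 : ℤ) ≠ 0))
    rw [← mul_assoc, ← pow_add, show p + (t - p) = t by omega]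
    push_cast at h ⊢
    rw [h]; ring

/-- The contribution of the odd indices has valuation exactly `2^m - m + n`, for `m = p + 3`, `n = t + 1`. -/
lemma oddPart {c p t J : ℕ} (hc : Odd c) (hpt : p + 2 ≤ t) (hJ : J + 1 = 4 * 2 ^ p) :
    ∃ o : ℤ, Odd o ∧ ∑ j ∈ range (J + 1), ((2 * J + 1).choose (2 * j + 1) : ℤ) *
        ((2 * j + 1 : ℤ) ^ (4 * (c * 2 ^ t)) - (2 * j + 1 : ℤ) ^ (2 * (c * 2 ^ t))) =
      2 ^ (8 * 2 ^ p - p - 2 + t) * o := by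
  have hp : p < 2 ^ p := Nat.lt_two_pow_self
  have hmem : 2 ^ p ∈ range (2 * (c * 2 ^ t) + 1) := by
    have h1 : 2 ^ p ≤ 2 ^ t := Nat.pow_le_pow_right (by norm_num) (by omega)
    have h2 : 2 ^ t ≤ c * 2 ^ t := Nat.le_mul_of_pos_left _ hc.pos
    rw [mem_range]; omega
  rw [oddPart_eq, ← add_sum_erase _ _ hmem]
  obtain ⟨a, ha, h1⟩ := chooseDiff_main hc (show p ≤ t by omega)
  obtain ⟨b, hb, h2⟩ := powSum_main hJ
  have hrest : (2 : ℤ) ^ (8 * 2 ^ p - p - 1 + t) ∣ ∑ s ∈ (range (2 * (c * 2 ^ t) + 1)).erase (2 ^ p),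
      chooseDiff (c * 2 ^ t) s * powSum J s := by
    refine dvd_sum fun s hs => ?_
    rcases Nat.eq_zero_or_pos s with rfl | hpos
    · simp [chooseDiff]
    · exact dvd_chooseDiff_mul_powSum hc.pos hJ hpos.ne' (ne_of_mem_erase hs)
  obtain ⟨y, hy⟩ := hrest
  refine ⟨a * b + 2 * y, (ha.mul (by exact_mod_cast hb)).add_even (even_two_mul y), ?_⟩
  rw [hy, h1, h2, show 8 * 2 ^ p - p - 1 + t = 8 * 2 ^ p - p - 2 + t + 1 by omega, pow_succ,
    show 8 * 2 ^ p - p - 2 + t = (t - p) + 2 * J by omega, pow_add]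
  push_cast
  ring

/-! ### The even indices and the case `3 ≤ m` -/

/-- Besides the obvious factor `2^L`, the sum over even indices has one more factor `2`: divided by
`2^L` it is congruent modulo `2` to `∑ j = J(J+1)/2`, which is even because `4 ∣ J + 1`. The case
`n = m`, `c = 1` needs this extra factor. -/
lemma evenPart {p J L : ℕ} (hJ : J + 1 = 4 * 2 ^ p) (hL : L ≠ 0) :
    2 ^ (L + 1) ∣ ∑ j ∈ range (J + 1), (2 * J + 1).choose (2 * j) * (2 * j) ^ L := by
  have hm : 2 ^ (p + 3) = 2 * J + 2 := by rw [pow_add]; omega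
  have h1 : ∑ j ∈ range (J + 1), (2 * J + 1).choose (2 * j) * j ^ L ≡
      ∑ j ∈ range (J + 1), j [MOD 2] := by
    refine Nat.ModEq.sum fun j hj => ?_
    have hj' := mem_range.mp hj
    have ho := odd_choose_mul_two_pow_sub_one one_pos (p + 3) (j := 2 * j) (by omega)
    rw [one_mul, show 2 ^ (p + 3) - 1 = 2 * J + 1 by omega] at ho
    rcases Nat.even_or_odd j with he | hjo
    · exact (Nat.even_iff.mp ((he.pow_of_ne_zero hL).mul_left _)).trans (Nat.even_iff.mp he).symm
    · exact (Nat.odd_iff.mp (ho.mul hjo.pow)).trans (Nat.odd_iff.mp hjo).symm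
  have h2 : ∑ j ∈ range (J + 1), j = 2 * (2 ^ p * J) := by
    have := Finset.sum_range_id_mul_two (J + 1)
    rw [Nat.add_sub_cancel, hJ] at this
    rw [hJ]; linarith
  rw [h2] at h1
  have h3 : 2 ∣ ∑ j ∈ range (J + 1), (2 * J + 1).choose (2 * j) * j ^ L :=
    (h1.dvd_iff dvd_rfl).mpr (dvd_mul_right _ _)
  rw [pow_succ]
  have h4 := mul_dvd_mul_left (2 ^ L) h3
  rw [mul_sum] at h4
  refine h4.trans (dvd_of_eq (sum_congr rfl fun j _ => ?_))
  rw [mul_pow]; ring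

/-- The explicit formula for odd `k = 2J + 1`, split by the parity of the index. -/
lemma factorial_mul_stirling_odd (J N : ℕ) :
    (((2 * J + 1).factorial * stirling N (2 * J + 1) : ℕ) : ℤ) =
      ∑ j ∈ range (J + 1), ((2 * J + 1).choose (2 * j + 1) : ℤ) * (2 * j + 1 : ℤ) ^ N -
      ((∑ j ∈ range (J + 1), (2 * J + 1).choose (2 * j) * (2 * j) ^ N : ℕ) : ℤ) := by
  have hsplit : ∀ (f : ℕ → ℤ) (H : ℕ), ∑ i ∈ range (2 * H), f i =
      ∑ j ∈ range H, (f (2 * j) + f (2 * j + 1)) := by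
    intro f H
    induction H with
    | zero => simp
    | succ H ih => rw [sum_range_succ, ← ih, mul_add, mul_one, sum_range_succ, sum_range_succ]; ring
  rw [factorial_mul_stirling, show 2 * J + 1 + 1 = 2 * (J + 1) by ring, hsplit]
  push_cast
  rw [← sum_sub_distrib]
  refine sum_congr rfl fun j _ => ?_
  have e1 : (-1 : ℤ) ^ (2 * J + 1 + 2 * j) = -1 := Odd.neg_one_pow ⟨J + j, by ring⟩
  have e2 : (-1 : ℤ) ^ (2 * J + 1 + (2 * j + 1)) = 1 := Even.neg_one_pow ⟨J + j + 1, by ring⟩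
  rw [e1, e2]; ring

lemma padicValInt_of_eq {z o : ℤ} {a : ℕ} (ho : Odd o) (h : z = 2 ^ a * o) :
    padicValInt 2 z = a := by
  have h0 : o ≠ 0 := by rintro rfl; simp at ho
  rw [h, padicValInt.mul (by positivity) h0]
  have h1 : padicValInt 2 ((2 : ℤ) ^ a) = a := by
    have := padicValInt.of_nat (p := 2) (n := 2 ^ a)
    push_cast at this
    rw [this, padicValNat.prime_pow]
  have h2 : padicValInt 2 o = 0 :=
    padicValInt.eq_zero_of_not_dvd (by
      rw [Nat.cast_ofNat, ← even_iff_two_dvd]; exact Int.not_even_iff_odd.mpr ho)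
  rw [h1, h2, add_zero]

/-- The case `m = p + 3`, `n = t + 1`. -/
lemma large_case {c p t : ℕ} (hc : Odd c) (hpt : p + 2 ≤ t) :
    padicValInt 2 ((stirling (c * 2 ^ (t + 2)) (2 ^ (p + 3) - 1) : ℤ) -
        stirling (c * 2 ^ (t + 1)) (2 ^ (p + 3) - 1)) = t + 2 := by
  have hp : p < 2 ^ p := Nat.lt_two_pow_self
  obtain ⟨J, hJ⟩ : ∃ J, J + 1 = 4 * 2 ^ p := ⟨4 * 2 ^ p - 1, by omega⟩
  have hm : 2 ^ (p + 3) = 2 * J + 2 := by rw [pow_add]; omega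
  rw [show 2 ^ (p + 3) - 1 = 2 * J + 1 by omega]
  rw [show c * 2 ^ (t + 2) = 4 * (c * 2 ^ t) by ring, show c * 2 ^ (t + 1) = 2 * (c * 2 ^ t) by ring]
  have hM : 4 * 2 ^ p + (t - p - 2) ≤ c * 2 ^ t := by
    obtain ⟨d, rfl⟩ := Nat.exists_eq_add_of_le hpt
    have h1 : d < 2 ^ d := Nat.lt_two_pow_self
    have h2 : 2 ^ (p + 2 + d) ≤ c * 2 ^ (p + 2 + d) := Nat.le_mul_of_pos_left _ hc.pos
    have h3 : 2 ^ (p + 2 + d) = 4 * 2 ^ p * 2 ^ d := by ring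
    have h4 : p + 2 + d - p - 2 = d := by omega
    rw [h4]
    nlinarith
  have hA := oddPart hc hpt hJ
  have hS1 := factorial_mul_stirling_odd J (4 * (c * 2 ^ t))
  have hS2 := factorial_mul_stirling_odd J (2 * (c * 2 ^ t))
  generalize c * 2 ^ t = M at *
  obtain ⟨a, ha, hA⟩ := hA
  obtain ⟨x, hx⟩ := (pow_dvd_pow 2 (show 8 * 2 ^ p - p - 2 + t + 1 ≤ 4 * M + 1 by omega)).trans
    (evenPart (L := 4 * M) hJ (by omega))
  obtain ⟨y, hy⟩ := (pow_dvd_pow 2 (show 8 * 2 ^ p - p - 2 + t + 1 ≤ 2 * M + 1 by omega)).trans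
    (evenPart (L := 2 * M) hJ (by omega))
  rw [hx] at hS1
  rw [hy] at hS2
  simp_rw [mul_sub] at hA
  rw [sum_sub_distrib] at hA
  obtain ⟨f, hf, hF⟩ := exists_odd_of_padicValNat (2 * J + 1).factorial_ne_zero
    (r := 8 * 2 ^ p - p - 4) (by
      have := fact_two_pow (p + 3)
      rw [show 2 ^ (p + 3) - 1 = 2 * J + 1 by omega] at this
      omega)
  have hfz : (f : ℤ) * ((stirling (4 * M) (2 * J + 1) : ℤ) - stirling (2 * M) (2 * J + 1)) =
      2 ^ (t + 2) * (a - 2 * x + 2 * y) := by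
    rw [hF] at hS1 hS2
    apply mul_left_cancel₀ (pow_ne_zero (8 * 2 ^ p - p - 4) (two_ne_zero : (2 : ℤ) ≠ 0))
    rw [← mul_assoc _ ((2 : ℤ) ^ (t + 2)), ← pow_add,
      show 8 * 2 ^ p - p - 4 + (t + 2) = 8 * 2 ^ p - p - 2 + t by omega]
    push_cast at hS1 hS2
    linear_combination hS1 - hS2 + hA
  have hcop : IsCoprime ((2 : ℤ) ^ (t + 2)) (f : ℤ) := by
    apply IsCoprime.pow_left
    rw [Int.isCoprime_iff_gcd_eq_one]
    exact_mod_cast hf.coprime_two_left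
  obtain ⟨z, hz⟩ := hcop.dvd_of_dvd_mul_left ⟨_, hfz⟩
  refine padicValInt_of_eq (o := z) ?_ hz
  rw [hz] at hfz
  have : (f : ℤ) * z = a - 2 * x + 2 * y := by
    apply mul_left_cancel₀ (pow_ne_zero (t + 2) (two_ne_zero : (2 : ℤ) ≠ 0))
    linear_combination hfz
  have ho : Odd ((f : ℤ) * z) := by
    rw [this]
    exact (ha.sub_even (even_two_mul _)).add_even (even_two_mul _)
  exact (Int.odd_mul.mp ho).2

/-! ### The case `m = 2` -/

/-- `ν₂(3^N - 1) = ν₂(N) + 2` for even `N`. -/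
lemma three_pow_sub_one {c : ℕ} (hc : Odd c) (n : ℕ) :
    ∃ o : ℤ, Odd o ∧ (3 : ℤ) ^ (c * 2 ^ (n + 1)) - 1 = 2 ^ (n + 3) * o := by
  induction n with
  | zero =>
    obtain ⟨d, rfl⟩ := hc
    have h9 : ∀ d : ℕ, ∃ y : ℤ, (3 : ℤ) ^ ((2 * d + 1) * 2 ^ (0 + 1)) = 16 * y + 9 := by
      intro d
      induction d with
      | zero => exact ⟨0, by norm_num⟩
      | succ d ih =>
        obtain ⟨y, hy⟩ := ih
        refine ⟨81 * y + 45, ?_⟩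
        rw [show (2 * (d + 1) + 1) * 2 ^ (0 + 1) = (2 * d + 1) * 2 ^ (0 + 1) + 4 by ring, pow_add, hy]
        ring
    obtain ⟨y, hy⟩ := h9 d
    exact ⟨2 * y + 1, ⟨y, rfl⟩, by rw [hy]; ring⟩
  | succ n ih =>
    obtain ⟨o, ho, h⟩ := ih
    refine ⟨o * (2 ^ (n + 2) * o + 1), ho.mul ?_, ?_⟩
    · refine Even.add_one ?_
      rw [pow_succ]
      exact ((even_two.mul_left _).mul_right _)
    · rw [show c * 2 ^ (n + 1 + 1) = c * 2 ^ (n + 1) * 2 by ring, pow_mul]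
      have h' : (3 : ℤ) ^ (c * 2 ^ (n + 1)) = 2 ^ (n + 3) * o + 1 := by linear_combination h
      rw [h']; ring

lemma two_mul_stirling_three (N : ℕ) :
    (2 * stirling (N + 1) 3 : ℤ) = 3 ^ N - 2 ^ (N + 1) + 1 := by
  have h := factorial_mul_stirling (N + 1) 3
  simp [sum_range_succ, Nat.factorial, Nat.choose] at h
  have : (3 : ℤ) * (2 * stirling (N + 1) 3) = 3 * (3 ^ N - 2 ^ (N + 1) + 1) := by
    rw [pow_succ 3 N] at h
    linear_combination h
  linarith

/-- The case `m = 2`, with `n` shifted by one. -/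
lemma small_case {c n : ℕ} (hc : Odd c) (hn : 1 ≤ n) (hex : ¬(n = 1 ∧ c = 1)) :
    padicValInt 2 ((stirling (c * 2 ^ (n + 2)) 3 : ℤ) - stirling (c * 2 ^ (n + 1)) 3) = n + 2 := by
  obtain ⟨o, ho, h3⟩ := three_pow_sub_one hc n
  -- This bound makes the powers of two in the explicit formula negligible; it is the only place where
  -- the exceptional triple must be excluded.
  have hbig : n + 5 ≤ c * 2 ^ (n + 1) := by
    rcases (show n = 1 ∨ 2 ≤ n by omega) with rfl | h2
    · have : 2 ≤ c := by have := hc.pos; omega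
      omega
    · obtain ⟨d, rfl⟩ := Nat.exists_eq_add_of_le h2
      have h1 : d < 2 ^ d := Nat.lt_two_pow_self
      have h4 : 2 ^ (2 + d + 1) ≤ c * 2 ^ (2 + d + 1) := Nat.le_mul_of_pos_left _ hc.pos
      have h5 : 2 ^ (2 + d + 1) = 8 * 2 ^ d := by ring
      omega
  rw [show c * 2 ^ (n + 2) = 2 * (c * 2 ^ (n + 1)) by ring]
  generalize c * 2 ^ (n + 1) = N at *
  obtain ⟨x, rfl⟩ := Nat.exists_eq_add_of_le hbig
  have e1 := two_mul_stirling_three (2 * (n + 5 + x) - 1)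
  have e2 := two_mul_stirling_three (n + 4 + x)
  rw [show 2 * (n + 5 + x) - 1 + 1 = 2 * (n + 5 + x) by omega,
    show 2 * (n + 5 + x) - 1 = (n + 4 + x) + (n + 5 + x) by omega, pow_add] at e1
  rw [show n + 4 + x + 1 = n + 5 + x by ring] at e2
  refine padicValInt_of_eq
    (o := 3 ^ (n + 4 + x) * o - 2 * (2 ^ (n + 6 + 2 * x) - 2 ^ (x + 1))) ?_ ?_
  · have h3o : Odd ((3 : ℤ) ^ (n + 4 + x)) := Odd.pow (by decide)
    exact (h3o.mul ho).sub_even (even_two_mul _)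
  · have h2 : (2 : ℤ) * ((stirling (2 * (n + 5 + x)) 3 : ℤ) - stirling (n + 5 + x) 3) =
        2 * (2 ^ (n + 2) * (3 ^ (n + 4 + x) * o - 2 * (2 ^ (n + 6 + 2 * x) - 2 ^ (x + 1)))) := by
      linear_combination e1 - e2 + 3 ^ (n + 4 + x) * h3
    linarith

theorem lengyel_conjecture (c m n : ℕ) (hc : 0 < c) (hcodd : Odd c) (hm : 2 ≤ m)
    (hmn : m ≤ n) :
    (¬(n = 2 ∧ m = 2 ∧ c = 1) →
      padicValInt 2 ((stirling (c * 2 ^ (n + 1)) (2 ^ m - 1) : ℤ) -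
        stirling (c * 2 ^ n) (2 ^ m - 1)) = n + 1) ∧
    padicValInt 2 ((stirling 8 3 : ℤ) - stirling 4 3) = 6 := by
  refine ⟨fun hex => ?_, ?_⟩
  · obtain ⟨t, rfl⟩ : ∃ t, n = t + 1 := ⟨n - 1, by omega⟩
    rcases (show m = 2 ∨ 3 ≤ m by omega) with rfl | h3
    · exact small_case hcodd (by omega) (by omega)
    · obtain ⟨p, rfl⟩ := Nat.exists_eq_add_of_le' h3
      exact large_case hcodd (by omega)
  · exact padicValInt_of_eq (o := 15) (by decide) (by norm_num [stirling])
end
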